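/- arXiv:1707.02508 — 2 statements merged into one kernel-verified Lean document; each statement's English description precedes it below -/
import Mathlib

section
/- Let K be a field of characteristic zero that is finitely generated over ℚ, and let R ⊆ K be a finitely generated subring. Then there exist infinitely many prime numbers p for which there is a field embedding ι : K → ℚ_p such that ι(R) ⊆ ℤ_p and ι(K) is dense in ℚ_p. -/
/-!
Let `x` be a transcendence basis of `K` over `ℤ`, let `A = ℤ[x]`, and write `K = Frac(A)(α)` with
`α` integral over `A` and minimal polynomial `f`. For an integer point `a` at which neither the
discriminant of `f` nor a common denominator `d` of the generators of `R` vanishes, the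
specialization `f(a, ·) ∈ ℤ[X]` is monic and nonconstant, so it has a root modulo infinitely many
primes `p`, all but finitely many of which divide neither of the two specialized values. For such
a `p`, since `ℤ_p` is uncountable, `a` is congruent modulo `p` to a point of `ℤ_p` with
algebraically independent coordinates, so `A` embeds into `ℤ_p`; by Hensel's lemma `f` acquires a
root in `ℤ_p`, which extends the embedding to `K → ℚ_p`. The image of `d * z` is integral over
`ℤ_p` for every generator `z`, and `d` maps to a unit, so `z` lands in `ℤ_p`. Density is automatic
because the image contains `ℚ`.
-/

open Cardinal Polynomial IntermediateField

universe u v w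

section IntegerPolynomial

theorem exists_prime_gt_dvd_eval {g : ℤ[X]} (hg : g.natDegree ≠ 0) (N : ℕ) :
    ∃ p : ℕ, N < p ∧ p.Prime ∧ ∃ m : ℤ, (p : ℤ) ∣ g.eval m := by
  obtain h0 | h0 := eq_or_ne (g.eval 0) 0
  · obtain ⟨p, hNp, hp⟩ := Nat.exists_infinite_primes (N + 1)
    exact ⟨p, hNp, hp, 0, by simp [h0]⟩
  -- As in Euclid's proof, `g (c * N! * k) / c` is congruent to `1` modulo `N!`, so its prime
  -- factors exceed `N`; some `k` makes this number different from `1` and `-1`.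
  set c := g.eval 0
  have hb : c * (N.factorial : ℤ) ≠ 0 := mul_ne_zero h0 (mod_cast N.factorial_ne_zero)
  have hdeg : (g.comp (C (c * (N.factorial : ℤ)) * X)).natDegree ≠ 0 := by
    rwa [natDegree_comp, natDegree_C_mul_X _ hb, mul_one]
  have := tendstoCofinite_of_natDegree_ne_zero _ hdeg
  obtain ⟨k, hk⟩ := (Filter.TendstoCofinite.finite_preimage
    (fun k ↦ (g.comp (C (c * (N.factorial : ℤ)) * X)).eval k)
    (Set.toFinite {c, -c})).infinite_compl.nonempty
  simp only [eval_comp, eval_mul, eval_C, eval_X, Set.mem_compl_iff, Set.mem_preimage,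
    Set.mem_insert_iff, Set.mem_singleton_iff, not_or] at hk
  set x := c * (N.factorial : ℤ) * k
  obtain ⟨w, hw⟩ : x ∣ g.eval x - c := by simpa using sub_dvd_eval_sub x 0 g
  have hval : g.eval x = c * (1 + (N.factorial : ℤ) * (k * w)) := by linear_combination hw
  have hne : (1 + (N.factorial : ℤ) * (k * w)).natAbs ≠ 1 := by
    rw [Ne, Int.natAbs_eq_iff]
    rintro (h | h)
    · exact hk.1 (by simp [hval, h])
    · exact hk.2 (by simp [hval, h])
  obtain ⟨p, hp, hpdvd⟩ := Nat.exists_prime_and_dvd hne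
  rw [← Int.natCast_dvd] at hpdvd
  refine ⟨p, ?_, hp, x, hval ▸ hpdvd.mul_left _⟩
  by_contra! hle
  have hpN : (p : ℤ) ∣ (N.factorial : ℤ) * (k * w) :=
    (Int.natCast_dvd_natCast.2 (Nat.dvd_factorial hp.pos hle)).mul_right _
  exact hp.one_lt.ne' (Nat.dvd_one.1 (mod_cast (Int.dvd_add_left hpN).1 hpdvd))

theorem infinite_setOf_prime_not_dvd_dvd_eval {g : ℤ[X]} (hg : g.natDegree ≠ 0) {c : ℤ}
    (hc : c ≠ 0) :
    {p : ℕ | p.Prime ∧ ¬ (p : ℤ) ∣ c ∧ ∃ m : ℤ, (p : ℤ) ∣ g.eval m}.Infinite := by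
  refine Set.infinite_of_forall_exists_gt fun N ↦ ?_
  obtain ⟨p, hNp, hp, hdvd⟩ := exists_prime_gt_dvd_eval hg (N + c.natAbs)
  refine ⟨p, ⟨hp, fun hpc ↦ ?_, hdvd⟩, by omega⟩
  have := Nat.le_of_dvd (Int.natAbs_pos.2 hc) (Int.natCast_dvd.1 hpc)
  omega

end IntegerPolynomial

section Separable

theorem separable_map_of_map_resultant_ne_zero {A k : Type*} [CommRing A] [Field k] {f : A[X]}
    (hf : f.natDegree ≠ 0) {φ : A →+* k} (h : φ (f.resultant (derivative f)) ≠ 0) :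
    (f.map φ).Separable := by
  obtain ⟨u, v, -, -, huv⟩ :=
    exists_mul_add_mul_eq_C_resultant f (derivative f) le_rfl le_rfl (.inl hf)
  set c := φ (f.resultant (derivative f))
  have hmap : f.map φ * u.map φ + derivative (f.map φ) * v.map φ = C c := by
    rw [derivative_map, ← Polynomial.map_mul, ← Polynomial.map_mul, ← Polynomial.map_add, huv,
      map_C]
  have hc : C c⁻¹ * C c = 1 := by rw [← C_mul, inv_mul_cancel₀ h, C_1]
  exact ⟨C c⁻¹ * u.map φ, C c⁻¹ * v.map φ, by linear_combination C c⁻¹ * hmap + hc⟩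

theorem resultant_derivative_ne_zero_of_separable_map {A B : Type*} [CommRing A] [CommRing B]
    [IsDomain B] {f : A[X]} {φ : A →+* B} (hφ : Function.Injective φ)
    (hsep : (f.map φ).Separable) : f.resultant (derivative f) ≠ 0 := by
  intro h
  apply resultant_ne_zero _ _ hsep
  rw [derivative_map, natDegree_map_eq_of_injective hφ, natDegree_map_eq_of_injective hφ,
    resultant_map_map, h, map_zero]

theorem exists_isRoot_of_separable_map {R k : Type*} [CommRing R] [CommRing k] {π : R →+* k}
    (hπ : Function.Surjective π) [HenselianRing R (RingHom.ker π)] {f : R[X]} (hf : f.Monic)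
    (hsep : (f.map π).Separable) {b : k} (hb : (f.map π).IsRoot b) :
    ∃ a, f.IsRoot a ∧ π a = b := by
  obtain ⟨b, rfl⟩ := hπ b
  have hroot : f.eval b ∈ RingHom.ker π := by rwa [RingHom.mem_ker, ← eval_map_apply]
  have hunit : IsUnit (Ideal.Quotient.mk (RingHom.ker π) ((derivative f).eval b)) := by
    rw [← isUnit_map_iff (RingHom.quotientKerEquivOfSurjective hπ),
      RingHom.quotientKerEquivOfSurjective_apply_mk, ← eval_map_apply, ← derivative_map]
    obtain ⟨u, v, huv⟩ := hsep
    have hv := congrArg (eval (π b)) huv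
    rw [eval_add, eval_mul, hb.eq_zero, mul_zero, zero_add, eval_mul, eval_one] at hv
    exact .of_mul_eq_one_right _ hv
  obtain ⟨a, ha, hab⟩ := HenselianRing.is_henselian f hf b hroot hunit
  exact ⟨a, ha, sub_eq_zero.1 (by rwa [RingHom.mem_ker, map_sub] at hab)⟩

end Separable

section AlgebraicIndependence

theorem mk_le_mk_of_isTranscendenceBasis {R : Type u} {A ι : Type v} [CommRing R] [Countable R]
    [CommRing A] [IsDomain A] [Uncountable A] [Algebra R A] {x : ι → A}
    (hx : IsTranscendenceBasis R x) : #A ≤ #ι := by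
  have : Nontrivial R := (algebraMap R A).domain_nontrivial
  have hadjoin : #(Algebra.adjoin R (Set.range x)) ≤ max #ι ℵ₀ := by
    rw [← lift_le.{max u v}, ← lift_mk_eq'.2 ⟨hx.1.aevalEquiv.toEquiv⟩]
    refine (lift_le.2 MvPolynomial.cardinalMk_le_max_lift).trans ?_
    have hR : lift.{v} #R ≤ ℵ₀ := lift_le_aleph0.2 mk_le_aleph0
    simpa using (le_total ℵ₀ #ι).imp_left fun h ↦ ⟨hR.trans (by simpa using h), h⟩
  have := hx.isAlgebraic
  have hA : #A ≤ max #ι ℵ₀ :=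
    (Algebra.IsAlgebraic.cardinalMk_le_max (Algebra.adjoin R (Set.range x)) A).trans
      (max_le hadjoin (le_max_right _ _))
  exact (le_max_iff.1 hA).resolve_right aleph0_lt_mk.not_ge

theorem exists_algebraicIndependent_of_mk_le {R : Type v} {A : Type w} [CommRing R] [Countable R]
    [CommRing A] [IsDomain A] [Uncountable A] [Algebra R A] [FaithfulSMul R A] {σ : Type u}
    (hσ : lift.{w} #σ ≤ lift.{u} #A) : ∃ x : σ → A, AlgebraicIndependent R x := by
  obtain ⟨B, hB⟩ := exists_isTranscendenceBasis R A
  obtain ⟨e⟩ := lift_mk_le'.1 (hσ.trans (lift_le.2 (mk_le_mk_of_isTranscendenceBasis hB)))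
  exact ⟨_, hB.1.comp e e.injective⟩

theorem isAlgebraic_adjoin_of_subfield_closure_eq_top {R K : Type*} [CommRing R] [Field K]
    [Algebra R K] {s : Set K} (hs : Subfield.closure s = ⊤) :
    Algebra.IsAlgebraic (Algebra.adjoin R s) K := by
  refine ⟨fun x ↦ ?_⟩
  have hx : x ∈ Subfield.closure s := hs ▸ Subfield.mem_top x
  induction hx using Subfield.closure_induction with
  | mem x hx => exact isAlgebraic_algebraMap (⟨x, Algebra.subset_adjoin hx⟩ : Algebra.adjoin R s)
  | one => exact isAlgebraic_one
  | add x y _ _ hx hy => exact hx.add hy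
  | neg x _ hx => exact hx.neg
  | inv x _ hx => exact hx.inv
  | mul x y _ _ hx hy => exact hx.mul hy

theorem essFiniteType_of_subfield_closure_eq_top {F K : Type*} [Field F] [Field K] [Algebra F K]
    {T : Set K} {s : Finset K} (hT : T ⊆ Set.range (algebraMap F K))
    (hs : Subfield.closure (T ∪ s) = ⊤) : Algebra.EssFiniteType F K := by
  refine fg_top_iff.1 ⟨s, ?_⟩
  rw [← toSubfield_inj, top_toSubfield, eq_top_iff, ← hs, Subfield.closure_le]
  refine Set.union_subset (hT.trans ?_) (subset_adjoin F _)
  rintro _ ⟨x, rfl⟩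
  exact (adjoin F (s : Set K)).algebraMap_mem x

end AlgebraicIndependence

section FractionField

variable {A F K : Type*} [CommRing A] [IsDomain A] [Field F] [Field K] [Algebra A F] [Algebra A K]
  [Algebra F K] [IsScalarTower A F K] [IsFractionRing A F]

variable (A F K) in
theorem exists_isIntegral_adjoin_simple_eq_top [FiniteDimensional F K]
    [Algebra.IsSeparable F K] : ∃ α : K, IsIntegral A α ∧ F⟮α⟯ = ⊤ := by
  obtain ⟨β, hβ⟩ := Field.exists_primitive_element F K
  have hβA : IsAlgebraic A β :=
    (IsFractionRing.isAlgebraic_iff A F K).2 (Algebra.IsAlgebraic.isAlgebraic β)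
  obtain ⟨d, hd, hdβ⟩ := hβA.exists_integral_multiple
  refine ⟨d • β, hdβ, ?_⟩
  rw [eq_top_iff, ← hβ, adjoin_simple_le_iff]
  have hd' : algebraMap A F d ≠ 0 := by simpa using hd
  have hmem := F⟮d • β⟯.smul_mem (mem_adjoin_simple_self F (d • β)) (x := (algebraMap A F d)⁻¹)
  rwa [← algebraMap_smul F d β, inv_smul_smul₀ hd', algebraMap_smul] at hmem

theorem exists_ringHom_comp_algebraMap_eq [IsIntegrallyClosed A] {α : K} (hα : IsIntegral A α)
    (htop : F⟮α⟯ = ⊤) {E : Type*} [Field E] {φ : A →+* E} (hφ : Function.Injective φ) {η : E}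
    (hη : (minpoly A α).eval₂ φ η = 0) : ∃ ι : K →+* E, ι.comp (algebraMap A K) = φ := by
  let ψ : F →+* E := IsFractionRing.lift hφ
  have hψ : ψ.comp (algebraMap A F) = φ := RingHom.ext (IsFractionRing.lift_algebraMap hφ)
  algebraize [ψ]
  have hαF : IsIntegral F α := hα.tower_top
  let pb := PowerBasis.ofAdjoinEqTop hαF
    (Algebra.adjoin_eq_top_of_primitive_element hαF.isAlgebraic htop)
  have hroot : aeval η (minpoly F pb.gen) = 0 := by
    rw [PowerBasis.ofAdjoinEqTop_gen, minpoly.isIntegrallyClosed_eq_field_fractions' F hα,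
      aeval_def, eval₂_map]
    exact hψ ▸ hη
  refine ⟨pb.lift η hroot, ?_⟩
  rw [IsScalarTower.algebraMap_eq A F K, ← RingHom.comp_assoc, AlgHom.comp_algebraMap]
  exact hψ

end FractionField

section Padic

variable {p : ℕ} [Fact p.Prime]

variable (p) in
theorem continuum_le_mk_padicInt : 𝔠 ≤ #ℤ_[p] :=
  (continuum_le_cardinal_of_isOpen ℚ_[p] (s := Set.range ((↑) : ℤ_[p] → ℚ_[p]))
    PadicInt.isOpenEmbedding_coe.isOpen_range ⟨_, Set.mem_range_self (0 : ℤ_[p])⟩).trans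
    mk_range_le

variable (p) in
theorem henselianRing_ker_toZMod :
    HenselianRing ℤ_[p] (RingHom.ker (PadicInt.toZMod (p := p))) := by
  rw [PadicInt.ker_toZMod]
  infer_instance

theorem norm_eq_one_of_toZMod_ne_zero {x : ℤ_[p]} (hx : PadicInt.toZMod x ≠ 0) : ‖x‖ = 1 := by
  refine (PadicInt.norm_le_one x).antisymm (not_lt.1 fun h ↦ hx ?_)
  rwa [← RingHom.mem_ker, PadicInt.ker_toZMod, IsLocalRing.mem_maximalIdeal,
    PadicInt.mem_nonunits]

theorem denseRange_ringHom_padic {K : Type*} [DivisionRing K] (ι : K →+* ℚ_[p]) :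
    DenseRange ι := by
  refine (Padic.denseRange_ratCast p).mono ?_
  rintro _ ⟨q, rfl⟩
  exact ⟨q, map_ratCast ι q⟩

theorem norm_map_le_one_of_isIntegral {A K : Type*} [CommRing A] [CommRing K] [Algebra A K]
    {ψ : A →+* ℤ_[p]} {ι : K →+* ℚ_[p]}
    (h : ι.comp (algebraMap A K) = PadicInt.Coe.ringHom.comp ψ) {y : K} (hy : IsIntegral A y) :
    ‖ι y‖ ≤ 1 := by
  have hιy : IsIntegral ℤ_[p] (ι y) := by
    obtain ⟨f, hf, hfy⟩ := hy
    refine ⟨f.map ψ, hf.map ψ, ?_⟩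
    have hroot := congrArg ι hfy
    rw [hom_eval₂, h, map_zero] at hroot
    rwa [eval₂_map]
  obtain ⟨x, hx⟩ := IsIntegrallyClosed.isIntegral_iff.1 hιy
  rw [← hx]
  exact PadicInt.norm_le_one x

variable (p) in
theorem exists_algebraicIndependent_toZMod_eq {σ : Type u} (hσ : #σ ≤ 𝔠) (a : σ → ℤ) :
    ∃ t : σ → ℤ_[p], AlgebraicIndependent ℤ t ∧ ∀ i, PadicInt.toZMod (t i) = a i := by
  have hp : (p : ℤ) ≠ 0 := NeZero.ne _
  have : Uncountable ℤ_[p] :=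
    aleph0_lt_mk_iff.1 (aleph0_lt_continuum.trans_le (continuum_le_mk_padicInt p))
  have hcard : 𝔠 ≤ lift.{u} #ℤ_[p] :=
    lift_continuum.{u, 0}.symm.trans_le (lift_le.2 (continuum_le_mk_padicInt p))
  obtain ⟨x, hx⟩ := exists_algebraicIndependent_of_mk_le (R := ℤ) (A := ℤ_[p]) (σ := σ) <| by
    simpa using hσ.trans hcard
  refine ⟨_, hx.polynomial_aeval_of_transcendental
    (f := fun i ↦ C (p : ℤ) * X + C (a i)) fun i ↦ transcendental _ ?_ ?_, fun i ↦ by simp⟩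
  · rw [natDegree_linear hp]
    exact one_ne_zero
  · rw [leadingCoeff_linear hp]
    exact mem_nonZeroDivisors_of_ne_zero hp

variable (p) in
theorem exists_injective_toZMod_comp_eq_eval {σ : Type u} (hσ : #σ ≤ 𝔠) (a : σ → ℤ) :
    ∃ ψ : MvPolynomial σ ℤ →+* ℤ_[p], Function.Injective ψ ∧
      PadicInt.toZMod.comp ψ = (Int.castRingHom (ZMod p)).comp (MvPolynomial.eval a) := by
  obtain ⟨t, ht, hta⟩ := exists_algebraicIndependent_toZMod_eq p hσ a
  exact ⟨(MvPolynomial.aeval t).toRingHom, ht, by ext i <;> simp [hta]⟩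

theorem exists_ringHom_padic_of_separable_map {A F K : Type*} [CommRing A] [IsDomain A]
    [IsIntegrallyClosed A] [Field F] [Field K] [Algebra A F] [Algebra A K] [Algebra F K]
    [IsScalarTower A F K] [IsFractionRing A F] {α : K} (hα : IsIntegral A α) (htop : F⟮α⟯ = ⊤)
    {ψ : A →+* ℤ_[p]} (hψ : Function.Injective ψ)
    (hsep : ((minpoly A α).map (PadicInt.toZMod.comp ψ)).Separable) {b : ZMod p}
    (hb : ((minpoly A α).map (PadicInt.toZMod.comp ψ)).IsRoot b) :
    ∃ ι : K →+* ℚ_[p], ι.comp (algebraMap A K) = PadicInt.Coe.ringHom.comp ψ := by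
  have := henselianRing_ker_toZMod p
  rw [← Polynomial.map_map] at hsep hb
  obtain ⟨η, hη, -⟩ := exists_isRoot_of_separable_map
    (ZMod.ringHom_surjective _) ((minpoly.monic hα).map ψ) hsep hb
  refine exists_ringHom_comp_algebraMap_eq (η := η) hα htop (Subtype.val_injective.comp hψ) ?_
  rw [IsRoot, eval_map] at hη
  exact (hom_eval₂ _ ψ PadicInt.Coe.ringHom η).symm.trans (by rw [hη, map_zero])

end Padic

section InfinitelyManyPrimes

variable {σ : Type u}

theorem infinite_setOf_exists_injective_padicInt (hσ : #σ ≤ 𝔠) {f : (MvPolynomial σ ℤ)[X]}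
    (hf : f.Monic) (hdeg : f.natDegree ≠ 0) {c : MvPolynomial σ ℤ} (hc : c ≠ 0) :
    {p : ℕ | ∃ _ : Fact p.Prime, ∃ ψ : MvPolynomial σ ℤ →+* ℤ_[p], Function.Injective ψ ∧
      PadicInt.toZMod (ψ c) ≠ 0 ∧ ∃ b, (f.map (PadicInt.toZMod.comp ψ)).IsRoot b}.Infinite := by
  obtain ⟨a, ha⟩ : ∃ a : σ → ℤ, MvPolynomial.eval a c ≠ 0 := by
    contrapose! hc
    exact MvPolynomial.funext fun a ↦ by rw [hc, map_zero]
  have hdeg' : (f.map (MvPolynomial.eval a)).natDegree ≠ 0 := by rwa [hf.natDegree_map]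
  refine (infinite_setOf_prime_not_dvd_dvd_eval hdeg' ha).mono ?_
  rintro p ⟨hp, hpc, m, hm⟩
  have := Fact.mk hp
  obtain ⟨ψ, hψ, hψa⟩ := exists_injective_toZMod_comp_eq_eval p hσ a
  refine ⟨this, ψ, hψ, ?_, m, ?_⟩
  · rw [← RingHom.comp_apply, hψa]
    exact mt (ZMod.intCast_zmod_eq_zero_iff_dvd _ p).1 hpc
  · rw [hψa, ← Polynomial.map_map, IsRoot, eval_intCast_map, eq_intCast]
    exact (ZMod.intCast_zmod_eq_zero_iff_dvd _ p).2 hm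

theorem infinite_setOf_exists_ringHom_padic (hσ : #σ ≤ 𝔠) (F : Type*) {K : Type*} [Field F]
    [Field K] [Algebra (MvPolynomial σ ℤ) F] [Algebra (MvPolynomial σ ℤ) K] [Algebra F K]
    [IsScalarTower (MvPolynomial σ ℤ) F K] [IsFractionRing (MvPolynomial σ ℤ) F]
    [FiniteDimensional F K] (r : Finset K) :
    {p : ℕ | ∃ _ : Fact p.Prime, ∃ ι : K →+* ℚ_[p],
      (∀ q : MvPolynomial σ ℤ, ‖ι (algebraMap _ K q)‖ ≤ 1) ∧ ∀ z ∈ r, ‖ι z‖ ≤ 1}.Infinite := by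
  set A := MvPolynomial σ ℤ
  have hinj : Function.Injective (algebraMap A F) := IsFractionRing.injective A F
  have : CharZero F := charZero_of_injective_ringHom hinj
  have : Algebra.IsAlgebraic A K := (IsFractionRing.comap_isAlgebraic_iff (K := F)).2 inferInstance
  obtain ⟨α, hα, htop⟩ := exists_isIntegral_adjoin_simple_eq_top A F K
  obtain ⟨d, hd, hdr⟩ := Algebra.IsAlgebraic.exists_integral_multiples A r
  have hdeg : (minpoly A α).natDegree ≠ 0 := (minpoly.natDegree_pos hα).ne'
  have hres : (minpoly A α).resultant (derivative (minpoly A α)) ≠ 0 := by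
    refine resultant_derivative_ne_zero_of_separable_map hinj ?_
    rw [← minpoly.isIntegrallyClosed_eq_field_fractions' F hα]
    exact Algebra.IsSeparable.isSeparable F α
  refine (infinite_setOf_exists_injective_padicInt hσ (minpoly.monic hα) hdeg
    (mul_ne_zero hres hd)).mono ?_
  rintro p ⟨hp, ψ, hψ, hc, b, hb⟩
  rw [map_mul, map_mul, mul_ne_zero_iff] at hc
  obtain ⟨ι, hι⟩ := exists_ringHom_padic_of_separable_map hα htop hψ
    (separable_map_of_map_resultant_ne_zero hdeg hc.1) hb
  refine ⟨hp, ι, fun q ↦ norm_map_le_one_of_isIntegral hι isIntegral_algebraMap, fun z hz ↦ ?_⟩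
  have hιd : ι (algebraMap A K d) = ψ d := DFunLike.congr_fun hι d
  have hdz := norm_map_le_one_of_isIntegral hι (hdr z hz)
  rwa [Algebra.smul_def, map_mul, norm_mul, hιd, ← PadicInt.norm_def,
    norm_eq_one_of_toZMod_ne_zero hc.2, one_mul] at hdz

theorem infinite_setOf_exists_ringHom_padic_of_isTranscendenceBasis (hσ : #σ ≤ 𝔠) {K : Type*}
    [Field K] {x : σ → K} (hx : IsTranscendenceBasis ℤ x) {s : Finset K}
    (hs : Subfield.closure (Set.range x ∪ s) = ⊤) (r : Finset K) :
    {p : ℕ | ∃ _ : Fact p.Prime, ∃ ι : K →+* ℚ_[p],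
      (∀ i, ‖ι (x i)‖ ≤ 1) ∧ ∀ z ∈ r, ‖ι z‖ ≤ 1}.Infinite := by
  let A := MvPolynomial σ ℤ
  let : Algebra A K := (MvPolynomial.aeval x).toAlgebra
  have : IsScalarTower ℤ A K := .of_algebraMap_eq' (MvPolynomial.aeval x).comp_algebraMap.symm
  have : FaithfulSMul A K := (faithfulSMul_iff_algebraMap_injective A K).2 hx.1
  let F := FractionRing A
  let : Algebra F K := FractionRing.liftAlgebra A K
  have : IsScalarTower A F K := FractionRing.isScalarTower_liftAlgebra A K
  have hX (i) : algebraMap A K (MvPolynomial.X i) = x i := MvPolynomial.aeval_X x i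
  have halg : Algebra.IsAlgebraic A K :=
    hx.isAlgebraic_iff.2 fun i ↦ hX i ▸ isAlgebraic_algebraMap (R := A) (MvPolynomial.X i)
  have : Algebra.IsAlgebraic F K := (IsFractionRing.comap_isAlgebraic_iff (A := A)).1 halg
  have hxF : Set.range x ⊆ Set.range (algebraMap F K) := by
    rintro _ ⟨i, rfl⟩
    exact ⟨algebraMap A F (MvPolynomial.X i), by rw [← IsScalarTower.algebraMap_apply, hX]⟩
  have := essFiniteType_of_subfield_closure_eq_top hxF hs
  have : FiniteDimensional F K := Algebra.finite_of_essFiniteType_of_isAlgebraic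
  refine (infinite_setOf_exists_ringHom_padic hσ F r).mono ?_
  rintro p ⟨hp, ι, hιA, hιr⟩
  exact ⟨hp, ι, fun i ↦ hX i ▸ hιA _, hιr⟩

end InfinitelyManyPrimes

theorem exists_infinitely_many_padic_embeddings_general {K : Type u} [Field K] {T : Set K}
    (hT : AlgebraicIndepOn ℤ id T) (hcard : #T ≤ 𝔠)
    (hK : ∃ s : Finset K, Subfield.closure (T ∪ s) = ⊤)
    (R : Subring K) (hR : ∃ r : Finset K, Subring.closure (T ∪ r) = R) :
    {p : ℕ | ∃ _ : Fact p.Prime, ∃ ι : K →+* ℚ_[p],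
      (∀ x ∈ R, ‖ι x‖ ≤ 1) ∧ DenseRange ι}.Infinite := by
  obtain ⟨s, hs⟩ := hK
  obtain ⟨r, rfl⟩ := hR
  have := isAlgebraic_adjoin_of_subfield_closure_eq_top (R := ℤ) hs
  obtain ⟨B, hTB, hBTs, hB⟩ :=
    exists_isTranscendenceBasis_between T (T ∪ s) Set.subset_union_left hT
  have hcardB : #B ≤ 𝔠 := (mk_le_mk_of_subset hBTs).trans <| (mk_union_le _ _).trans <|
    add_le_of_le aleph0_le_continuum hcard (mk_le_aleph0.trans aleph0_le_continuum)
  have hBs : Subfield.closure (Set.range ((↑) : B → K) ∪ s) = ⊤ := by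
    rw [Subtype.range_coe, eq_top_iff, ← hs]
    exact Subfield.closure_mono (Set.union_subset_union_left _ hTB)
  refine (infinite_setOf_exists_ringHom_padic_of_isTranscendenceBasis hcardB hB hBs r).mono ?_
  rintro p ⟨hp, ι, hιB, hιr⟩
  refine ⟨hp, ι, ?_, denseRange_ringHom_padic ι⟩
  change Subring.closure (T ∪ r) ≤ (PadicInt.subring p).comap ι
  exact Subring.closure_le.2 (Set.union_subset (fun x hx ↦ hιB ⟨x, hTB hx⟩) hιr)

/-- Let `K` be a finitely generated field of characteristic zero and `R ⊆ K` a finitely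
generated subring. Then there are infinitely many primes `p` for which there is a field
embedding `ι : K → ℚ_p` with `ι(R) ⊆ ℤ_p` (i.e. `‖ι x‖ ≤ 1` for all `x ∈ R`) and with
`ι(K)` dense in `ℚ_p`. -/
theorem exists_infinitely_many_padic_embeddings
    {K : Type} [Field K] [CharZero K]
    (hKfg : ∃ s : Finset K, Subfield.closure (s : Set K) = ⊤)
    (R : Subring K) (hRfg : ∃ s : Finset K, Subring.closure (s : Set K) = R) :
    ∃ S : Set ℕ, S.Infinite ∧ (∀ p ∈ S, p.Prime) ∧
      ∀ (p : ℕ), p ∈ S → ∀ [Fact p.Prime],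
        ∃ ι : K →+* ℚ_[p], (∀ x ∈ R, ‖ι x‖ ≤ 1) ∧ DenseRange ι := by
  have hinf := exists_infinitely_many_padic_embeddings_general
    ((algebraicIndependent_empty_iff ℤ K).2 (algebraMap ℤ K).injective_int) (by simp)
    (by simpa using hKfg) R (by simpa using hRfg)
  exact ⟨_, hinf, fun _ ⟨hp, _⟩ ↦ hp.out, fun _ ⟨_, hι⟩ _ ↦ hι⟩
end

section
/- Let K be a field, let Δ ⊆ M_n(K) be a multiplicative subsemigroup of the n×n matrices over K which is absolutely irreducible, and let E be a subfield of K such that tr(δ) ∈ E for every δ ∈ Δ. Then the characteristic polynomial of every δ ∈ Δ has all its coefficients in E. -/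
/-- A multiplicative subsemigroup `Δ ⊆ Mₙ(K)` is *absolutely irreducible* if the natural action
of `Δ` on `K̄ⁿ` is irreducible, where `K̄` is an algebraic closure of `K`: the space is nonzero
and the only `Δ`-invariant subspaces of `K̄ⁿ` are `0` and `K̄ⁿ`. -/
def Subsemigroup.AbsolutelyIrreducible {K : Type*} [Field K] {n : ℕ}
    (Δ : Subsemigroup (Matrix (Fin n) (Fin n) K)) : Prop :=
  0 < n ∧
  ∀ W : Submodule (AlgebraicClosure K) (Fin n → AlgebraicClosure K),
    (∀ δ ∈ Δ, ∀ x ∈ W, (δ.map (algebraMap K (AlgebraicClosure K))).mulVec x ∈ W) →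
    W = ⊥ ∨ W = ⊤

/-! Over an algebraic closure `F` of `K`, Burnside's theorem shows that the algebra `E[Δ]` spans
`Mₙ(F)`, and all of its traces lie in `E`. The two embeddings `F ⇉ F ⊗[E] F` agree on `E`; since
the trace form is nondegenerate, the two resulting copies of `E[Δ]` in `Mₙ(F ⊗[E] F)` satisfy the
same linear relations, so one is carried to the other by an `F`-algebra homomorphism
`Mₙ(F) → Mₙ(F ⊗[E] F)`. Such a homomorphism is locally inner, hence preserves characteristic
polynomials. The coefficients thus have equal images under the two embeddings, and by faithfully
flat descent they lie in `E`.
-/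

open Matrix Polynomial

section Burnside

variable {F V : Type*} [Field F] [AddCommGroup V] [Module F V]

theorem isSimpleModule_adjoin_of_invtSubmodule [Nontrivial V] {S : Set (Module.End F V)}
    (hS : ∀ W : Submodule F V, (∀ f ∈ S, W ∈ f.invtSubmodule) → W = ⊥ ∨ W = ⊤) :
    IsSimpleModule (Algebra.adjoin F S) V := by
  refine (isSimpleModule_iff _ _).2 { eq_bot_or_eq_top := fun W => ?_ }
  have hW : ∀ f ∈ S, W.restrictScalars F ∈ f.invtSubmodule := fun f hf x hx =>
    W.smul_mem ⟨f, Algebra.subset_adjoin hf⟩ hx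
  simpa using hS _ hW

theorem subalgebra_eq_top_of_isSimpleModule [IsAlgClosed F] [FiniteDimensional F V]
    (A : Subalgebra F (Module.End F V)) [IsSimpleModule A V] : A = ⊤ := by
  have schur := IsSimpleModule.algebraMap_end_bijective_of_isAlgClosed (A := A) (V := V) F
  have : Module.Finite (Module.End A V) V := .of_restrictScalars_finite F _ _
  refine eq_top_iff.2 fun f _ => ?_
  let f' : Module.End (Module.End A V) V :=
    { f with
      map_smul' := fun c x => by
        obtain ⟨t, rfl⟩ := schur.2 c
        simp }
  obtain ⟨a, ha⟩ := Module.Finite.toModuleEnd_moduleEnd_surjective f'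
  have hfa : (a : Module.End F V) = f := LinearMap.ext fun x => congr($ha x)
  exact hfa ▸ a.2

theorem adjoin_map_eq_top_of_absolutelyIrreducible {K : Type*} [Field K] {n : ℕ}
    {Δ : Subsemigroup (Matrix (Fin n) (Fin n) K)} (hΔ : Δ.AbsolutelyIrreducible) :
    Algebra.adjoin (AlgebraicClosure K)
      ((algebraMap K (AlgebraicClosure K)).mapMatrix '' (Δ : Set (Matrix (Fin n) (Fin n) K))) =
      ⊤ := by
  have : NeZero n := ⟨hΔ.1.ne'⟩
  let e := toLinAlgEquiv' (R := AlgebraicClosure K) (n := Fin n)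
  apply Subalgebra.map_injective (f := e.toAlgHom) e.injective
  rw [← Algebra.adjoin_image, Algebra.map_top, (AlgHom.range_eq_top _).2 e.surjective]
  have := isSimpleModule_adjoin_of_invtSubmodule
    (S := e.toAlgHom '' ((algebraMap K _).mapMatrix '' Δ))
    fun W hW => hΔ.2 W fun δ hδ x hx => hW _ ⟨_, ⟨δ, hδ, rfl⟩, rfl⟩ hx
  exact subalgebra_eq_top_of_isSimpleModule (Algebra.adjoin _ _)

end Burnside

section AlgHom

variable {R L n : Type*} [CommRing R] [CommRing L] [Fintype n] [DecidableEq n]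

/-- The matrix whose `j`-th column is the `v`-th column of `ψ e_{j,o}`, where `e` denotes the
matrix units. It intertwines `ψ` with the standard embedding, and conjugates one into the other as
soon as its determinant is invertible. -/
def intertwiner (ψ : Matrix n n R →+* Matrix n n L) (o v : n) : Matrix n n L :=
  of fun i j => ψ (single j o 1) i v

theorem map_mul_intertwiner [Algebra R L] (ψ : Matrix n n R →ₐ[R] Matrix n n L) (o v : n)
    (x : Matrix n n R) :
    ψ x * intertwiner ψ.toRingHom o v = intertwiner ψ.toRingHom o v * x.map (algebraMap R L) := by
  ext i j
  have column : x * single j o 1 = ∑ k, x k j • single k o 1 := by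
    ext a b
    by_cases hb : o = b <;> simp [mul_apply, single_apply, Matrix.sum_apply, hb]
  calc (ψ x * intertwiner ψ.toRingHom o v) i j
      = ψ (x * single j o 1) i v := by simp [intertwiner, mul_apply]
    _ = ∑ k, x k j • ψ (single k o 1) i v := by
      rw [column, map_sum, Matrix.sum_apply]
      simp only [map_smul, Matrix.smul_apply]
    _ = (intertwiner ψ.toRingHom o v * x.map (algebraMap R L)) i j := by
      simp [intertwiner, mul_apply, Algebra.smul_def, mul_comm]

theorem map_single_ne_zero [Nontrivial L] (ψ : Matrix n n R →+* Matrix n n L) (o : n) :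
    ψ (single o o 1) ≠ 0 := by
  intro h
  have : Nonempty n := ⟨o⟩
  apply one_ne_zero (α := Matrix n n L)
  calc (1 : Matrix n n L)
      = ψ (∑ i, single i o 1 * single o o 1 * single o i 1) := by simp [sum_single_one]
    _ = 0 := by simp only [map_sum, map_mul, h, mul_zero, zero_mul, Finset.sum_const_zero]

theorem exists_det_intertwiner_ne_zero [IsDomain L] (ψ : Matrix n n R →+* Matrix n n L) (o : n) :
    ∃ v, (intertwiner ψ o v).det ≠ 0 := by
  by_contra! hdet
  refine map_single_ne_zero ψ o (ext fun i v => ?_)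
  obtain ⟨w, hw, hPw⟩ := exists_mulVec_eq_zero_iff.2 (hdet v)
  obtain ⟨j, hj⟩ := Function.ne_iff.1 hw
  -- Multiplying by `ψ e_{o,j}` isolates the `j`-th coefficient of the relation `w`.
  have isolate : ∀ k, (ψ (single o j 1) * intertwiner ψ o v) i k =
      if j = k then ψ (single o o 1) i v else 0 := fun k => by
    have : (ψ (single o j 1) * intertwiner ψ o v) i k =
        ψ (single o j 1 * single k o 1) i v := by simp [intertwiner, mul_apply]
    rw [this]
    split_ifs with hjk <;> simp [hjk]
  have : ψ (single o o 1) i v * w j = 0 :=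
    calc ψ (single o o 1) i v * w j
        = ((ψ (single o j 1) * intertwiner ψ o v) *ᵥ w) i := by
          simp [mulVec, dotProduct, isolate]
      _ = 0 := by rw [← mulVec_mulVec, hPw, mulVec_zero, Pi.zero_apply]
  exact (mul_eq_zero.1 this).resolve_right hj

theorem span_range_det_intertwiner (ψ : Matrix n n R →+* Matrix n n L) (o : n) :
    Ideal.span (Set.range fun v => (intertwiner ψ o v).det) = ⊤ := by
  by_contra hne
  obtain ⟨m, hm, hle⟩ := Ideal.exists_le_maximal _ hne
  obtain ⟨v, hv⟩ := exists_det_intertwiner_ne_zero ((Ideal.Quotient.mk m).mapMatrix.comp ψ) o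
  refine hv ?_
  calc (intertwiner ((Ideal.Quotient.mk m).mapMatrix.comp ψ) o v).det
      = Ideal.Quotient.mk m (intertwiner ψ o v).det :=
        ((Ideal.Quotient.mk m).map_det (intertwiner ψ o v)).symm
    _ = 0 := Ideal.Quotient.eq_zero_iff_mem.2 (hle (Ideal.subset_span ⟨v, rfl⟩))

theorem det_smul_charpoly_eq_of_mul_eq_mul {A B P : Matrix n n L} (h : A * P = P * B) :
    P.det • A.charpoly = P.det • B.charpoly := by
  have hchar : A.charmatrix * P.map C = P.map C * B.charmatrix := by
    simp only [charmatrix, sub_mul, mul_sub, RingHom.mapMatrix_apply]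
    rw [← Matrix.map_mul, ← Matrix.map_mul, h, (scalar_commute _ (Commute.all _) _).eq]
  have hdet : (P.map C).det = C P.det := (RingHom.map_det C P).symm
  have := congrArg det hchar
  rw [det_mul, det_mul, hdet] at this
  rw [smul_eq_C_mul, smul_eq_C_mul, mul_comm, charpoly, charpoly, this]

theorem charpoly_algHom_apply [Algebra R L] (ψ : Matrix n n R →ₐ[R] Matrix n n L)
    (x : Matrix n n R) : (ψ x).charpoly = x.charpoly.map (algebraMap R L) := by
  rcases isEmpty_or_nonempty n with _ | ⟨⟨o⟩⟩
  · simp [charpoly]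
  rw [← charpoly_map, ← sub_eq_zero, ← Submodule.mem_bot L]
  refine Submodule.mem_of_span_top_of_smul_mem _ _ (span_range_det_intertwiner ψ.toRingHom o) _ ?_
  rintro ⟨_, v, rfl⟩
  rw [Submodule.mem_bot, smul_sub, sub_eq_zero]
  exact det_smul_charpoly_eq_of_mul_eq_mul (map_mul_intertwiner ψ o v x)

end AlgHom

section TraceForm

variable {R L n : Type*} [CommRing R] [CommRing L] [Fintype n]

theorem eq_of_forall_trace_mul_map_eq {S : Set (Matrix n n R)} (hS : Submodule.span R S = ⊤)
    (g : R →+* L) {a b : Matrix n n L}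
    (h : ∀ s ∈ S, trace (a * s.map g) = trace (b * s.map g)) : a = b := by
  have hall (x : Matrix n n R) : trace (a * x.map g) = trace (b * x.map g) := by
    induction hS.ge (Submodule.mem_top (x := x)) using Submodule.span_induction with
    | mem s hs => exact h s hs
    | zero => simp
    | add x y _ _ hx hy => simp [Matrix.map_add, mul_add, hx, hy]
    | smul c x _ hx => simp [Matrix.map_smul', hx]
  classical
  ext i j
  simpa [trace_mul_single] using hall (single j i 1)

variable [DecidableEq n] [Algebra R L] {S : Submonoid (Matrix n n R)} {g : R →+* L}

theorem exists_linearMap_trace_mul_map_eq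
    (hS : Submodule.span R (S : Set (Matrix n n R)) = ⊤)
    (htr : ∀ s ∈ S, algebraMap R L (trace s) = g (trace s)) :
    ∃ ψ : Matrix n n R →ₗ[R] Matrix n n L,
      ∀ x, ∀ s ∈ S, trace (ψ x * s.map g) = algebraMap R L (trace (x * s)) := by
  have hex (x : Matrix n n R) : ∃ y : Matrix n n L, ∀ s ∈ S,
      trace (y * s.map g) = algebraMap R L (trace (x * s)) := by
    induction hS.ge (Submodule.mem_top (x := x)) using Submodule.span_induction with
    | mem t ht =>
      refine ⟨t.map g, fun s hs => ?_⟩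
      rw [htr _ (S.mul_mem ht hs), ← Matrix.map_mul]
      exact (AddMonoidHom.map_trace g.toAddMonoidHom _).symm
    | zero => exact ⟨0, by simp⟩
    | add x x' _ _ hx hx' =>
      obtain ⟨y, hy⟩ := hx
      obtain ⟨y', hy'⟩ := hx'
      exact ⟨y + y', fun s hs => by simp [add_mul, hy s hs, hy' s hs]⟩
    | smul c x _ hx =>
      obtain ⟨y, hy⟩ := hx
      exact ⟨c • y, fun s hs => by
        rw [smul_mul_assoc, smul_mul_assoc, trace_smul, trace_smul, hy s hs, smul_eq_mul,
          map_mul, Algebra.smul_def]⟩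
  choose ψ hψ using hex
  refine ⟨⟨⟨ψ, fun x y => ?_⟩, fun c x => ?_⟩, hψ⟩
  · refine eq_of_forall_trace_mul_map_eq hS g fun s hs => ?_
    simp [add_mul, hψ _ s hs]
  · refine eq_of_forall_trace_mul_map_eq hS g fun s hs => ?_
    rw [RingHom.id_apply, smul_mul_assoc, trace_smul, hψ x s hs, hψ _ s hs, smul_mul_assoc,
      trace_smul, smul_eq_mul, map_mul, Algebra.smul_def]

theorem exists_algHom_eq_map (hS : Submodule.span R (S : Set (Matrix n n R)) = ⊤)
    (htr : ∀ s ∈ S, algebraMap R L (trace s) = g (trace s)) :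
    ∃ ψ : Matrix n n R →ₐ[R] Matrix n n L, ∀ s ∈ S, ψ s = s.map g := by
  obtain ⟨ψ, hψ⟩ := exists_linearMap_trace_mul_map_eq hS htr
  have hψS : ∀ s ∈ S, ψ s = s.map g := fun s hs =>
    eq_of_forall_trace_mul_map_eq hS g fun t ht => by
      rw [hψ s t ht, htr _ (S.mul_mem hs ht), ← Matrix.map_mul]
      exact AddMonoidHom.map_trace g.toAddMonoidHom _
  have hψmul_right : ∀ x, ∀ s ∈ S, ψ (x * s) = ψ x * ψ s := fun x s hs =>
    eq_of_forall_trace_mul_map_eq hS g fun t ht => by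
      rw [hψ _ t ht, hψS s hs, mul_assoc, mul_assoc, ← Matrix.map_mul,
        hψ x _ (S.mul_mem hs ht)]
  have hψmul : ∀ x y, ψ (x * y) = ψ x * ψ y := fun x y => by
    have : ψ ∘ₗ LinearMap.mulLeft R x = LinearMap.mulLeft R (ψ x) ∘ₗ ψ :=
      LinearMap.ext_on hS (hψmul_right x)
    exact congr($this y)
  exact ⟨AlgHom.ofLinearMap ψ (by simp [hψS 1 S.one_mem]) hψmul, hψS⟩

theorem charpoly_map_eq_of_trace_map_eq (hS : Submodule.span R (S : Set (Matrix n n R)) = ⊤)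
    (htr : ∀ s ∈ S, algebraMap R L (trace s) = g (trace s)) {s : Matrix n n R} (hs : s ∈ S) :
    s.charpoly.map (algebraMap R L) = s.charpoly.map g := by
  obtain ⟨ψ, hψ⟩ := exists_algHom_eq_map hS htr
  rw [← charpoly_algHom_apply ψ, hψ s hs, charpoly_map]

end TraceForm

theorem eq_one_or_mem_of_mem_closure {M : Type*} [Monoid M] {Δ : Subsemigroup M} {x : M}
    (hx : x ∈ Submonoid.closure (Δ : Set M)) : x = 1 ∨ x ∈ Δ := by
  induction hx using Submonoid.closure_induction with
  | mem x hx => exact .inr hx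
  | one => exact .inl rfl
  | mul x y _ _ hx hy =>
    rcases hx with rfl | hx
    · simpa using hy
    rcases hy with rfl | hy
    · exact .inr (by simpa using hx)
    · exact .inr (Δ.mul_mem hx hy)

theorem span_adjoin_eq_adjoin (E F : Type*) {A : Type*} [CommSemiring E] [CommSemiring F]
    [Semiring A] [Algebra E F] [Algebra E A] [Algebra F A] [IsScalarTower E F A] (s : Set A) :
    Submodule.span F (Algebra.adjoin E s : Set A) =
      Subalgebra.toSubmodule (Algebra.adjoin F s) := by
  refine le_antisymm (Submodule.span_le.2 ?_) ((Algebra.adjoin_toSubmodule_le F).2 ?_)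
  · exact (Algebra.adjoin_le Algebra.subset_adjoin :
      Algebra.adjoin E s ≤ (Algebra.adjoin F s).restrictScalars E)
  · have hle : Submonoid.closure s ≤ (Algebra.adjoin E s).toSubmonoid :=
      Submonoid.closure_le.2 Algebra.subset_adjoin
    exact Set.Subset.trans hle Submodule.subset_span

section Descent

variable {E F n : Type*} [CommRing E] [CommRing F] [Algebra E F] [Fintype n] [DecidableEq n]

theorem charpoly_coeff_mem_range_of_span_eq_top (hEF : Algebra.IsEffective E F)
    {S : Submonoid (Matrix n n F)} (hS : Submodule.span F (S : Set (Matrix n n F)) = ⊤)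
    (htr : ∀ s ∈ S, trace s ∈ (algebraMap E F).range) {s : Matrix n n F} (hs : s ∈ S) (i : ℕ) :
    s.charpoly.coeff i ∈ (algebraMap E F).range := by
  let includeRight : F →+* TensorProduct E F F :=
    (Algebra.TensorProduct.includeRight : F →ₐ[E] TensorProduct E F F).toRingHom
  have htr' : ∀ s ∈ S, algebraMap F (TensorProduct E F F) (trace s) = includeRight (trace s) := by
    intro s hs
    obtain ⟨e, he⟩ := htr s hs
    rw [← he]
    exact Algebra.TensorProduct.tmul_one_eq_one_tmul e
  have hcoeff := congrArg (coeff · i) (charpoly_map_eq_of_trace_map_eq hS htr' hs)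
  simp only [coeff_map] at hcoeff
  refine (hEF _).1 ?_
  rw [Algebra.TensorProduct.includeLeftSubRight_apply, sub_eq_zero]
  exact hcoeff

theorem trace_mem_range_of_mem_adjoin {Δ : Subsemigroup (Matrix n n F)}
    (htr : ∀ δ ∈ Δ, trace δ ∈ (algebraMap E F).range) {x : Matrix n n F}
    (hx : x ∈ Algebra.adjoin E (Δ : Set (Matrix n n F))) : trace x ∈ (algebraMap E F).range := by
  rw [← Subalgebra.mem_toSubmodule, Algebra.adjoin_eq_span] at hx
  induction hx using Submodule.span_induction with
  | mem x hx =>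
    rcases eq_one_or_mem_of_mem_closure hx with rfl | hx
    · rw [trace_one]
      exact natCast_mem _ _
    · exact htr x hx
  | zero => simp
  | add x y _ _ hx hy => simpa using add_mem hx hy
  | smul c x _ hx =>
    rw [trace_smul, Algebra.smul_def]
    exact mul_mem ⟨c, rfl⟩ hx

end Descent

theorem charpoly_coeff_mem_of_trace_mem_general {K : Type*} [Field K] {n : ℕ}
    (Δ : Subsemigroup (Matrix (Fin n) (Fin n) K)) (hirr : Δ.AbsolutelyIrreducible)
    (E : Subfield K) (htr : ∀ δ ∈ Δ, trace δ ∈ E) :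
    ∀ x ∈ Algebra.adjoin E (Δ : Set (Matrix (Fin n) (Fin n) K)),
      ∀ i : ℕ, x.charpoly.coeff i ∈ E := by
  intro x hx i
  let F := AlgebraicClosure K
  let φ : Matrix (Fin n) (Fin n) K →ₐ[E] Matrix (Fin n) (Fin n) F :=
    (IsScalarTower.toAlgHom E K F).mapMatrix
  let A := (Algebra.adjoin E (Δ : Set (Matrix (Fin n) (Fin n) K))).map φ
  have hspan : Submodule.span F (A : Set (Matrix (Fin n) (Fin n) F)) = ⊤ := by
    have hA : A = Algebra.adjoin E (φ '' Δ) := AlgHom.map_adjoin φ _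
    rw [hA, span_adjoin_eq_adjoin, ← Algebra.top_toSubmodule (R := F)]
    exact congrArg _ (adjoin_map_eq_top_of_absolutelyIrreducible hirr)
  have htrA : ∀ a ∈ A.toSubmonoid, trace a ∈ (algebraMap E F).range := by
    rintro _ ⟨y, hy, rfl⟩
    obtain ⟨e, he⟩ := trace_mem_range_of_mem_adjoin (fun δ hδ => ⟨⟨_, htr δ hδ⟩, rfl⟩) hy
    refine ⟨e, ?_⟩
    rw [IsScalarTower.algebraMap_apply E K F, he]
    exact AddMonoidHom.map_trace (algebraMap K F) y
  obtain ⟨e, he⟩ := charpoly_coeff_mem_range_of_span_eq_top (.of_faithfullyFlat E F) hspan htrA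
    (Subalgebra.mem_map.2 ⟨x, hx, rfl⟩) i
  have hcoeff : (φ x).charpoly.coeff i = algebraMap K F (x.charpoly.coeff i) := by
    rw [← coeff_map, ← charpoly_map]
    rfl
  rw [hcoeff] at he
  exact (algebraMap K F).injective he ▸ e.2

/-- **Vinberg's lemma** (Prasad–Rapinchuk, Lemma 5.2). Let `Δ ⊆ Mₙ(K)` be an absolutely
irreducible multiplicative semigroup and `E` a subfield of `K` containing the traces of all
elements of `Δ`. Then the characteristic polynomial of every `δ ∈ Δ` has coefficients in `E`. -/
theorem charpoly_coeff_mem_of_trace_mem {K : Type} [Field K] {n : ℕ}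
    (Δ : Subsemigroup (Matrix (Fin n) (Fin n) K))
    (hirr : Δ.AbsolutelyIrreducible)
    (E : Subfield K) (htr : ∀ δ ∈ Δ, Matrix.trace δ ∈ E) :
    ∀ δ ∈ Δ, ∀ i : ℕ, (Matrix.charpoly δ).coeff i ∈ E := by
  exact fun δ hδ =>
    charpoly_coeff_mem_of_trace_mem_general Δ hirr E htr δ (Algebra.subset_adjoin hδ)
end
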